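/- Let F_D be the set of decorated planar forests with decorations in D = {•} ∪ ℕ, and let 𝒦 be the subspace of the free ℝ-vector space on F_D spanned by those forests in which some ℕ-decorated node is not a leaf. Then 𝒦 is an ideal with respect to the concatenation product, the shuffle product, the (Guin–Oudom extended) left grafting, and the Grossman–Larson product: if π ∈ 𝒦 or η ∈ 𝒦, then π·η, π ⧢ η, π ↷ η, and π ⋄ η all lie in 𝒦. -/

import Mathlib

/-! Decorated planar forests over the decoration set `D = {•} ∪ ℕ`, the
concatenation, shuffle, (Guin–Oudom) left grafting and Grossman–Larson products
on the free ℝ-vector space they span, and the statement that the span `𝒦` of the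
forests having a numbered node which is not a leaf is an ideal for all four
products. -/

inductive Dec : Type where
  | bullet : Dec
  | num : ℕ → Dec
  deriving DecidableEq

/-- Decorated planar trees: a decoration together with an ordered list of subtrees. -/
inductive PTree : Type where
  | node : Dec → List PTree → PTree

/-- Decorated planar forests: ordered lists of decorated planar trees. -/
abbrev Forest : Type := List PTree

namespace PTree

/-- Every numbered node of the tree is a leaf. -/
def numLeavesT : PTree → Bool
  | .node (.num _) ts => ts.isEmpty
  | .node .bullet ts => ts.attach.all fun t => numLeavesT t.1
decreasing_by
  have := List.sizeOf_lt_of_mem t.2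
  simp only [PTree.node.sizeOf_spec]
  omega

end PTree

/-- Every numbered node of the forest is a leaf. -/
def allNumLeaves (π : Forest) : Bool := π.all PTree.numLeavesT

noncomputable section

/-- The free ℝ-vector space spanned by decorated planar forests. -/
abbrev VF := Forest →₀ ℝ

/-- The free ℝ-vector space spanned by decorated planar trees. -/
abbrev VT := PTree →₀ ℝ

mutual
/-- Left grafting of the tree `τ` onto a tree:
`τ ↷ B⁺_d(γ₁⋯γₙ) = B⁺_d(τ·γ₁⋯γₙ + ∑ᵢ γ₁⋯(τ ↷ γᵢ)⋯γₙ)`. -/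
def graftTT (τ : PTree) : PTree → VT
  | .node d ts =>
      Finsupp.single (.node d (τ :: ts)) 1 +
        (graftTL τ ts).sum fun ts' c => Finsupp.single (.node d ts') c

/-- Left grafting of the tree `τ` into one of the trees of a forest (a derivation,
this is `τ ↷ (γ₁⋯γₙ) = ∑ᵢ γ₁⋯(τ ↷ γᵢ)⋯γₙ`; in particular `τ ↷ 1 = 0`). -/
def graftTL (τ : PTree) : List PTree → VF
  | [] => 0
  | t :: ts =>
      ((graftTT τ t).sum fun t' c => Finsupp.single (t' :: ts) c) +
        ((graftTL τ ts).sum fun ts' c => Finsupp.single (t :: ts') c)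
end

/-- Guin–Oudom left grafting of a forest onto a forest, with explicit fuel:
`1 ↷ η = η` and `(τ·π) ↷ η = τ ↷ (π ↷ η) − (τ ↷ π) ↷ η`.
(The fuel `π.length` always suffices, since `graftTL` preserves the number of trees.) -/
def graftFuel : ℕ → Forest → Forest → VF
  | _, [], η => Finsupp.single η 1
  | 0, _ :: _, _ => 0
  | n + 1, τ :: π, η =>
      ((graftFuel n π η).sum fun ρ c => c • graftTL τ ρ) -
        ((graftTL τ π).sum fun ρ c => c • graftFuel n ρ η)

/-- Guin–Oudom left grafting of a forest onto a forest. -/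
def graftF (π η : Forest) : VF := graftFuel π.length π η

/-- All splittings of a list into a pair of complementary subsequences
(the deshuffle coproduct). -/
def splits {α : Type*} : List α → List (List α × List α)
  | [] => [([], [])]
  | a :: l => ((splits l).map fun p => (a :: p.1, p.2)) ++ ((splits l).map fun p => (p.1, a :: p.2))

/-- All interleavings of two lists. -/
def shuffleL {α : Type*} : List α → List α → List (List α)
  | [], l => [l]
  | l, [] => [l]
  | a :: u, b :: v =>
      ((shuffleL u (b :: v)).map (a :: ·)) ++ ((shuffleL (a :: u) v).map (b :: ·))
termination_by l₁ l₂ => l₁.length + l₂.length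

/-- Grossman–Larson product of two forests: `π ⋄ η = π₍₁₎ · (π₍₂₎ ↷ η)`. -/
def glF (π η : Forest) : VF :=
  ((splits π).map fun p => (graftF p.2 η).sum fun ρ c => Finsupp.single (p.1 ++ ρ) c).sum

/-- Shuffle product of two forests. -/
def shF (π η : Forest) : VF := ((shuffleL π η).map fun w => Finsupp.single w (1 : ℝ)).sum

/-- Concatenation product of two forests. -/
def concatF (π η : Forest) : VF := Finsupp.single (π ++ η) 1

/-- Bilinear extension to `VF` of a product defined on basis forests. -/
def ext2 (f : Forest → Forest → VF) (x y : VF) : VF :=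
  x.sum fun π a => y.sum fun η b => (a * b) • f π η

/-- The subspace `𝒦` spanned by the forests in which a numbered node is found at a
position which is not a leaf. -/
def KBad : Submodule ℝ VF :=
  Submodule.span ℝ {v | ∃ π : Forest, allNumLeaves π = false ∧ v = Finsupp.single π (1 : ℝ)}

theorem numLeavesT_num (n : ℕ) (ts : List PTree) :
    (PTree.node (.num n) ts).numLeavesT = ts.isEmpty := by
  rw [PTree.numLeavesT]

theorem numLeavesT_bullet (ts : List PTree) :
    (PTree.node .bullet ts).numLeavesT = allNumLeaves ts := by
  rw [PTree.numLeavesT, allNumLeaves, Bool.eq_iff_iff]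
  simp

theorem allNumLeaves_cons (t : PTree) (ts : Forest) :
    allNumLeaves (t :: ts) = (t.numLeavesT && allNumLeaves ts) := rfl

theorem allNumLeaves_append (π η : Forest) :
    allNumLeaves (π ++ η) = (allNumLeaves π && allNumLeaves η) := List.all_append

theorem KBad_eq_supported :
    KBad = Finsupp.supported ℝ ℝ {π : Forest | allNumLeaves π = false} := by
  rw [Finsupp.supported_eq_span_single, KBad]
  congr 1
  ext v
  exact exists_congr fun π => and_congr_right fun _ => eq_comm

theorem sum_mem_of_mem_supported {α M : Type*} [AddCommGroup M] [Module ℝ M]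
    {s : Set α} {x : α →₀ ℝ} (hx : x ∈ Finsupp.supported ℝ ℝ s) (K : Submodule ℝ M)
    {g : α → ℝ → M} (hg : ∀ a ∈ s, ∀ c, g a c ∈ K) : x.sum g ∈ K :=
  K.sum_mem fun a ha => hg a (hx ha) _

mutual

theorem graftTT_mem (τ : PTree) : ∀ t : PTree, graftTT τ t ∈ Finsupp.supported ℝ ℝ
    {t' : PTree | τ.numLeavesT = false ∨ t.numLeavesT = false → t'.numLeavesT = false}
  | .node d ts => by
    rw [graftTT]
    refine Submodule.add_mem _ (Finsupp.single_mem_supported ℝ _ ?_)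
      (sum_mem_of_mem_supported (graftTL_mem τ ts) _ fun ts' h c =>
        Finsupp.single_mem_supported ℝ _ ?_)
    · cases d with
      | num n => simp [numLeavesT_num]
      | bullet => simp only [Set.mem_ofPred_eq, numLeavesT_bullet, allNumLeaves_cons, Bool.and_eq_false_iff,
          imp_self]
    · cases d with
      | num n => simp [numLeavesT_num, h.1]
      | bullet => simpa only [Set.mem_ofPred_eq, numLeavesT_bullet] using h.2

theorem graftTL_mem (τ : PTree) : ∀ ts : List PTree, graftTL τ ts ∈ Finsupp.supported ℝ ℝ
    {ts' : Forest | ts' ≠ [] ∧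
      (τ.numLeavesT = false ∨ allNumLeaves ts = false → allNumLeaves ts' = false)}
  | [] => by
    rw [graftTL]
    exact Submodule.zero_mem _
  | t :: ts => by
    rw [graftTL]
    refine Submodule.add_mem _
      (sum_mem_of_mem_supported (graftTT_mem τ t) _ fun t' h c =>
        Finsupp.single_mem_supported ℝ _ ⟨List.cons_ne_nil _ _, ?_⟩)
      (sum_mem_of_mem_supported (graftTL_mem τ ts) _ fun ts' h c =>
        Finsupp.single_mem_supported ℝ _ ⟨List.cons_ne_nil _ _, ?_⟩)
    · simp only [Set.mem_ofPred_eq, allNumLeaves_cons, Bool.and_eq_false_iff] at h ⊢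
      tauto
    · simp only [Set.mem_ofPred_eq, allNumLeaves_cons, Bool.and_eq_false_iff] at h ⊢
      tauto

end

theorem graftTL_mem_KBad {τ : PTree} {π : Forest}
    (h : τ.numLeavesT = false ∨ allNumLeaves π = false) : graftTL τ π ∈ KBad := by
  rw [KBad_eq_supported]
  exact Finsupp.supported_mono (fun _ h' => h'.2 h) (graftTL_mem τ π)

theorem single_mem_KBad {π : Forest} (h : allNumLeaves π = false) (c : ℝ) :
    Finsupp.single π c ∈ KBad := by
  rw [KBad_eq_supported]
  exact Finsupp.single_mem_supported ℝ _ h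

theorem sum_mem_KBad {x : VF} (hx : x ∈ KBad) {g : Forest → ℝ → VF}
    (hg : ∀ π, allNumLeaves π = false → ∀ c, g π c ∈ KBad) : x.sum g ∈ KBad := by
  rw [KBad_eq_supported] at hx
  exact sum_mem_of_mem_supported hx _ hg

theorem graftFuel_mem_KBad (n : ℕ) : ∀ π η : Forest,
    allNumLeaves π = false ∨ allNumLeaves η = false → graftFuel n π η ∈ KBad := by
  induction n with
  | zero =>
    rintro (_ | ⟨τ, π⟩) η h
    · rw [graftFuel]
      exact single_mem_KBad (h.resolve_left (by simp [allNumLeaves])) _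
    · rw [graftFuel]
      exact Submodule.zero_mem _
  | succ n ih =>
    rintro (_ | ⟨τ, π⟩) η h
    · rw [graftFuel]
      exact single_mem_KBad (h.resolve_left (by simp [allNumLeaves])) _
    · rw [graftFuel]
      rw [allNumLeaves_cons, Bool.and_eq_false_iff] at h
      refine Submodule.sub_mem _ ?_ ?_
      · by_cases hτ : τ.numLeavesT = false
        · exact Submodule.sum_mem _ fun ρ _ =>
            Submodule.smul_mem _ _ (graftTL_mem_KBad (.inl hτ))
        · exact sum_mem_KBad (ih π η (by tauto)) fun ρ hρ c =>
            Submodule.smul_mem _ _ (graftTL_mem_KBad (.inr hρ))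
      · by_cases hη : allNumLeaves η = false
        · exact Submodule.sum_mem _ fun ρ _ => Submodule.smul_mem _ _ (ih ρ η (.inr hη))
        · exact sum_mem_KBad (graftTL_mem_KBad (by tauto)) fun ρ hρ c =>
            Submodule.smul_mem _ _ (ih ρ η (.inl hρ))

theorem graftF_mem_KBad {π η : Forest}
    (h : allNumLeaves π = false ∨ allNumLeaves η = false) : graftF π η ∈ KBad :=
  graftFuel_mem_KBad _ π η h

theorem concatF_mem_KBad {π η : Forest}
    (h : allNumLeaves π = false ∨ allNumLeaves η = false) : concatF π η ∈ KBad :=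
  single_mem_KBad (by rwa [allNumLeaves_append, Bool.and_eq_false_iff]) _

theorem perm_append_of_mem_splits {α : Type*} {l : List α} :
    ∀ {p : List α × List α}, p ∈ splits l → (p.1 ++ p.2).Perm l := by
  induction l with
  | nil => simp [splits]
  | cons a l ih =>
    intro p hp
    simp only [splits, List.mem_append, List.mem_map] at hp
    obtain ⟨q, hq, rfl⟩ | ⟨q, hq, rfl⟩ := hp
    · exact (ih hq).cons a
    · exact List.perm_middle.trans ((ih hq).cons a)

theorem perm_append_of_mem_shuffleL {α : Type*} (u v : List α) :
    ∀ w ∈ shuffleL u v, w.Perm (u ++ v) := by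
  induction u, v using shuffleL.induct with
  | case1 l => simp [shuffleL]
  | case2 l hl =>
    cases l with
    | nil => exact absurd rfl hl
    | cons a l => simp [shuffleL]
  | case3 a u b v ih₁ ih₂ =>
    intro w hw
    simp only [shuffleL, List.mem_append, List.mem_map] at hw
    obtain ⟨w, hw, rfl⟩ | ⟨w, hw, rfl⟩ := hw
    · exact (ih₁ w hw).cons a
    · exact ((ih₂ w hw).cons b).trans List.perm_middle.symm

theorem allNumLeaves_eq_of_perm {π η : Forest} (h : π.Perm η) :
    allNumLeaves π = allNumLeaves η := h.all_eq

theorem shF_mem_KBad {π η : Forest}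
    (h : allNumLeaves π = false ∨ allNumLeaves η = false) : shF π η ∈ KBad := by
  refine list_sum_mem fun v hv => ?_
  obtain ⟨w, hw, rfl⟩ := List.mem_map.1 hv
  refine single_mem_KBad ?_ _
  rwa [allNumLeaves_eq_of_perm (perm_append_of_mem_shuffleL π η w hw), allNumLeaves_append,
    Bool.and_eq_false_iff]

theorem glF_mem_KBad {π η : Forest}
    (h : allNumLeaves π = false ∨ allNumLeaves η = false) : glF π η ∈ KBad := by
  refine list_sum_mem fun v hv => ?_
  obtain ⟨p, hp, rfl⟩ := List.mem_map.1 hv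
  rw [← allNumLeaves_eq_of_perm (perm_append_of_mem_splits hp), allNumLeaves_append,
    Bool.and_eq_false_iff] at h
  by_cases h₁ : allNumLeaves p.1 = false
  · exact Submodule.sum_mem _ fun ρ _ => single_mem_KBad (by simp [allNumLeaves_append, h₁]) _
  · exact sum_mem_KBad (graftF_mem_KBad (by tauto)) fun ρ hρ c =>
      single_mem_KBad (by simp [allNumLeaves_append, hρ]) _

theorem ext2_mem_KBad {f : Forest → Forest → VF}
    (hf : ∀ {π η : Forest}, allNumLeaves π = false ∨ allNumLeaves η = false → f π η ∈ KBad)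
    {x y : VF} (h : x ∈ KBad ∨ y ∈ KBad) : ext2 f x y ∈ KBad := by
  rcases h with h | h
  · exact sum_mem_KBad h fun π hπ a => Submodule.sum_mem _ fun η _ =>
      Submodule.smul_mem _ _ (hf (.inl hπ))
  · exact Submodule.sum_mem _ fun π _ => sum_mem_KBad h fun η hη b =>
      Submodule.smul_mem _ _ (hf (.inr hη))

/-- `𝒦` is an ideal with respect to the concatenation, shuffle, grafting and
Grossman–Larson products. -/
theorem stmt11 (x y : VF) (h : x ∈ KBad ∨ y ∈ KBad) :
    ext2 concatF x y ∈ KBad ∧ ext2 shF x y ∈ KBad ∧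
      ext2 graftF x y ∈ KBad ∧ ext2 glF x y ∈ KBad :=
  ⟨ext2_mem_KBad concatF_mem_KBad h, ext2_mem_KBad shF_mem_KBad h,
    ext2_mem_KBad graftF_mem_KBad h, ext2_mem_KBad glF_mem_KBad h⟩

end
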